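/- Under the stated hypotheses, if the convex hull K(σ) of σ does not intersect Σ and ‖V‖ < √2·d (equivalently, δ_V < d), then the spectrum of B in the open d-neighborhood O_d(σ) of σ is separated from the remainder of the spectrum of B; more precisely, spec(B) ∩ O_d(σ) = spec(B) ∩ U_{δ_V}(σ) and this set is nonempty and closed, where U_{δ_V}(σ) is the closed δ_V-neighborhood of σ. -/

import Mathlib

/-- `E` is the projection-valued spectral measure of the bounded self-adjoint operator `T`
on the complex Hilbert space `H`: each `E Δ` (for Borel `Δ ⊆ ℝ`) is an orthogonal
projection, `E` is multiplicative and countably additive (in the strong sense), `E ℝ = 1`,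
each `E Δ` commutes with `T`, and on the range of `E Δ` the operator `T` has its
approximate point spectrum inside the closure of `Δ` (which uniquely characterizes the
spectral measure of `T`). -/
structure IsSpectralMeasure {H : Type*} [NormedAddCommGroup H] [InnerProductSpace ℂ H]
    [CompleteSpace H] (T : H →L[ℂ] H) (E : Set ℝ → H →L[ℂ] H) : Prop where
  isSelfAdjoint : ∀ Δ : Set ℝ, MeasurableSet Δ → IsSelfAdjoint (E Δ)
  map_inter : ∀ Δ₁ Δ₂ : Set ℝ, MeasurableSet Δ₁ → MeasurableSet Δ₂ →
    E Δ₁ * E Δ₂ = E (Δ₁ ∩ Δ₂)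
  map_univ : E Set.univ = 1
  countably_additive : ∀ Δ : ℕ → Set ℝ, (∀ n, MeasurableSet (Δ n)) →
    Pairwise (Function.onFun Disjoint Δ) →
    ∀ x : H, HasSum (fun n => E (Δ n) x) (E (⋃ n, Δ n) x)
  commutes : ∀ Δ : Set ℝ, MeasurableSet Δ → Commute T (E Δ)
  spectrum_loc : ∀ Δ : Set ℝ, MeasurableSet Δ → ∀ x : H, E Δ x = x →
    ∀ μ : ℝ, Metric.infDist μ Δ * ‖x‖ ≤ ‖T x - (μ : ℂ) • x‖

/-!
Let `σ` and `Σ` be the two parts of `spec A` and let `μ` lie in `O_d(σ)` but not in `U_δ(σ)`,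
`δ = δ_V`. By definition of `δ` one has `δ (δ + d) = ‖V‖²`. On `Ran E_A([μ, ∞))` the quadratic
form of `A - μ` is at least `p` on the `σ`-component and at least `q` on the `Σ`-component, with
`p q > δ (δ + d) = ‖V‖²`; so it dominates the cross terms of the off-diagonal `V`, and `B - μ` is
uniformly positive there. By symmetry `B - μ` is uniformly negative on `Ran E_A((-∞, μ))`. With
`x = y + z` split along these two subspaces, the mixed terms cancel in `Re ⟪(B - μ) x, z - y⟫`,
which is therefore at least `c ‖x‖²`, and `μ ∉ spec B`.

For nonemptiness, choose a continuous `f` equal to `1` on `U_δ(σ)` and to `0` off `O_d(σ)`. The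
first part applies to every `A + t V` with `t ∈ [0, 1]`, so `t ↦ f (A + t V)` is a norm-continuous
path of idempotents. As a nonzero idempotent has norm at least `1`, such a path cannot reach `0`.
-/

section Real

theorem exists_pos_mul_sq_add_sq_le {p q v : ℝ} (hp : 0 < p) (hq : 0 < q) (h : v ^ 2 < p * q) :
    ∃ c > 0, ∀ s t : ℝ, c * (s ^ 2 + t ^ 2) ≤ p * s ^ 2 - 2 * v * s * t + q * t ^ 2 := by
  have hpq : 0 < p + q := add_pos hp hq
  refine ⟨(p * q - v ^ 2) / (p + q), div_pos (sub_pos.2 h) hpq, fun s t => ?_⟩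
  have hdiff : p * s ^ 2 - 2 * v * s * t + q * t ^ 2 -
      (p * q - v ^ 2) / (p + q) * (s ^ 2 + t ^ 2) =
        ((p * s - v * t) ^ 2 + (v * s - q * t) ^ 2) / (p + q) := by
    field_simp
    ring
  exact sub_nonneg.1 (hdiff ▸ by positivity)

theorem nonneg_of_forall_nonneg_add_mul {k s : ℝ} (h : ∀ r > 0, 0 ≤ k + r * s) : 0 ≤ s := by
  by_contra! hs
  have hlt := h ((|k| + 1) / -s) (div_pos (by positivity) (neg_pos.2 hs))
  rw [div_mul_eq_mul_div, div_neg, mul_div_cancel_right₀ _ hs.ne] at hlt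
  linarith [le_abs_self k]

theorem infDist_neg_neg (x : ℝ) (s : Set ℝ) : Metric.infDist (-x) (-s) = Metric.infDist x s := by
  rw [← Set.image_neg_eq_neg]
  exact Metric.infDist_image (IsometryEquiv.neg ℝ).isometry

theorem nonempty_of_sInf_pos {S : Set ℝ} (h : 0 < sInf S) : S.Nonempty :=
  Set.nonempty_iff_ne_empty.2 fun hS => h.ne' (hS ▸ Real.sInf_empty)

theorem sInf_image2_dist_le {α : Type*} [PseudoMetricSpace α] {S T : Set α} {s t : α}
    (hs : s ∈ S) (ht : t ∈ T) : sInf (Set.image2 dist S T) ≤ dist s t :=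
  csInf_le ⟨0, by rintro _ ⟨_, -, _, -, rfl⟩; exact dist_nonneg⟩ (Set.mem_image2_of_mem hs ht)

/-- The quantity `δ_V = ‖V‖ tan (½ arctan (2‖V‖ / d))` as a function of `v = ‖V‖` and of the
distance `d` between the two parts of the unperturbed spectrum: an
off-diagonal perturbation of norm `v` moves the spectrum by at most this much. -/
noncomputable def offDiagonalShift (v d : ℝ) : ℝ :=
  v * Real.tan (Real.arctan (2 * v / d) / 2)

variable {v d : ℝ}

theorem offDiagonalShift_nonneg (hv : 0 ≤ v) (hd : 0 ≤ d) : 0 ≤ offDiagonalShift v d := by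
  have harctan : 0 ≤ Real.arctan (2 * v / d) := Real.arctan_nonneg.2 (by positivity)
  exact mul_nonneg hv (Real.tan_nonneg_of_nonneg_of_le_pi_div_two (by linarith)
    (by linarith [Real.arctan_lt_pi_div_two (2 * v / d)]))

theorem offDiagonalShift_mul_add (hd : d ≠ 0) :
    offDiagonalShift v d * (offDiagonalShift v d + d) = v ^ 2 := by
  have hlt := Real.arctan_lt_pi_div_two (2 * v / d)
  have hgt := Real.neg_pi_div_two_lt_arctan (2 * v / d)
  set t := Real.tan (Real.arctan (2 * v / d) / 2) with ht
  have ht_one : t < 1 := by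
    rw [ht, ← Real.tan_pi_div_four]
    exact Real.tan_lt_tan_of_lt_of_lt_pi_div_two (by linarith) (by linarith) (by linarith)
  have ht_neg_one : -1 < t := by
    rw [ht, ← Real.tan_pi_div_four, ← Real.tan_neg]
    exact Real.tan_lt_tan_of_lt_of_lt_pi_div_two (by linarith) (by linarith) (by linarith)
  have htan : 2 * t / (1 - t ^ 2) = 2 * v / d := by
    rw [ht, ← Real.tan_two_mul, mul_div_cancel₀ _ (two_ne_zero' ℝ), Real.tan_arctan]
  rw [div_eq_div_iff (by nlinarith) hd] at htan
  change v * t * (v * t + d) = v ^ 2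
  linear_combination v / 2 * htan

theorem offDiagonalShift_lt (hv : 0 ≤ v) (hd : 0 < d) (h : v < Real.sqrt 2 * d) :
    offDiagonalShift v d < d := by
  have hsq : v ^ 2 < 2 * d ^ 2 := by
    have := pow_lt_pow_left₀ h hv two_ne_zero
    rwa [mul_pow, Real.sq_sqrt zero_le_two] at this
  nlinarith [offDiagonalShift_mul_add (v := v) hd.ne', offDiagonalShift_nonneg hv hd.le]

end Real

section Gap

/-- Above `μ`, the sets `σ` and `τ` keep distances `p` and `q` from `μ` with `v² < p q`. This is
the amount of room which lets the diagonal part of an operator dominate an off-diagonal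
perturbation of norm `v` on the spectral subspace above `μ`. -/
def HasGapAbove (σ τ : Set ℝ) (v μ : ℝ) : Prop :=
  ∃ p > 0, ∃ q > 0, v ^ 2 < p * q ∧
    (∀ s ∈ σ, μ ≤ s → μ + p ≤ s) ∧ ∀ t ∈ τ, μ ≤ t → μ + q ≤ t

variable {σ τ : Set ℝ} {d : ℝ}

theorem forall_add_le_or_forall_add_le_of_disjoint_convexHull
    (hconv : Disjoint (convexHull ℝ σ) τ) (hdist : ∀ s ∈ σ, ∀ t ∈ τ, d ≤ dist s t) {t : ℝ}
    (ht : t ∈ τ) : (∀ s ∈ σ, s + d ≤ t) ∨ ∀ s ∈ σ, t + d ≤ s := by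
  by_contra! hcon
  obtain ⟨⟨a, ha, hta⟩, ⟨b, hb, hbt⟩⟩ := hcon
  have hda := hdist a ha t ht
  have hdb := hdist b hb t ht
  rw [Real.dist_eq, le_abs] at hda hdb
  have hmem : t ∈ Set.Icc b a := ⟨by grind, by grind⟩
  rw [← segment_eq_Icc (hmem.1.trans hmem.2)] at hmem
  exact Set.disjoint_left.1 hconv (segment_subset_convexHull hb ha hmem) ht

theorem hasGapAbove_of_forall_add_le_or {v r μ : ℝ} (hr : 0 < r) (hd : 0 < d)
    (hv : v ^ 2 < r * (r + d)) (hsep : ∀ t ∈ τ, (∀ s ∈ σ, s + d ≤ t) ∨ ∀ s ∈ σ, t + d ≤ s)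
    (hfar : ∀ s ∈ σ, r ≤ dist s μ) (hnear : ∃ s ∈ σ, dist s μ < d) : HasGapAbove σ τ v μ := by
  obtain ⟨s, hs, hsμ⟩ := hnear
  rw [Real.dist_eq, abs_lt] at hsμ
  have hσ_above : ∀ s' ∈ σ, μ ≤ s' → μ + r ≤ s' := fun s' hs' hle => by
    have := hfar s' hs'
    rw [Real.dist_eq, abs_of_nonneg (sub_nonneg.2 hle)] at this
    linarith
  have hτ_above : ∀ t ∈ τ, μ ≤ t → ∀ s' ∈ σ, s' + d ≤ t := fun t ht hle =>
    (hsep t ht).resolve_right fun hbelow => by linarith [hbelow s hs]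
  by_cases hex : ∃ s₀ ∈ σ, μ ≤ s₀
  · obtain ⟨s₀, hs₀, hle⟩ := hex
    exact ⟨r, hr, r + d, by positivity, hv, hσ_above, fun t ht htμ => by
      linarith [hσ_above s₀ hs₀ hle, hτ_above t ht htμ s₀ hs₀]⟩
  · push Not at hex
    have hq : 0 < s + d - μ := by linarith
    -- no point of `σ` lies above `μ`, so `p` may be as large as `v ^ 2 < p * q` demands
    refine ⟨(v ^ 2 + 1) / (s + d - μ), by positivity, s + d - μ, hq, ?_,
      fun s' hs' hle => absurd (hex s' hs') hle.not_gt, fun t ht htμ => ?_⟩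
    · rw [div_mul_cancel₀ _ hq.ne']
      exact lt_add_one _
    · linarith [hτ_above t ht htμ s hs]

end Gap

section OffDiagonal

/-- The element `v` is off-diagonal with respect to the idempotent `p`: its two diagonal blocks,
compressed by `p` and by `1 - p`, vanish. -/
structure IsOffDiagonal {R : Type*} [Ring R] (p v : R) : Prop where
  mul_mul_eq_zero : p * v * p = 0
  one_sub_mul_mul_eq_zero : (1 - p) * v * (1 - p) = 0

namespace IsOffDiagonal

variable {R : Type*} [Ring R] {p v : R}

theorem neg (h : IsOffDiagonal p v) : IsOffDiagonal p (-v) where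
  mul_mul_eq_zero := by rw [mul_neg, neg_mul, h.mul_mul_eq_zero, neg_zero]
  one_sub_mul_mul_eq_zero := by rw [mul_neg, neg_mul, h.one_sub_mul_mul_eq_zero, neg_zero]

theorem smul {S : Type*} [Monoid S] [DistribMulAction S R] [IsScalarTower S R R]
    [SMulCommClass S R R] (h : IsOffDiagonal p v) (c : S) : IsOffDiagonal p (c • v) where
  mul_mul_eq_zero := by rw [mul_smul_comm, smul_mul_assoc, h.mul_mul_eq_zero, smul_zero]
  one_sub_mul_mul_eq_zero := by
    rw [mul_smul_comm, smul_mul_assoc, h.one_sub_mul_mul_eq_zero, smul_zero]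

end IsOffDiagonal

end OffDiagonal

section Hilbert

open ContinuousLinearMap

open scoped InnerProductSpace

variable {H : Type*} [NormedAddCommGroup H] [InnerProductSpace ℂ H]

theorem norm_add_sq_of_inner_eq_zero {x y : H} (h : ⟪x, y⟫_ℂ = 0) :
    ‖x + y‖ ^ 2 = ‖x‖ ^ 2 + ‖y‖ ^ 2 := by
  simp [norm_add_sq (𝕜 := ℂ), h]

theorem sub_algebraMap_real_apply (T : H →L[ℂ] H) (μ : ℝ) (x : H) :
    (T - algebraMap ℝ (H →L[ℂ] H) μ) x = T x - (μ : ℂ) • x := by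
  simp [Algebra.algebraMap_eq_smul_one]

variable [CompleteSpace H] {T P : H →L[ℂ] H}

theorem isUnit_iff_exists_mul_norm_le_of_isSelfAdjoint (hT : IsSelfAdjoint T) :
    IsUnit T ↔ ∃ c > 0, ∀ x, c * ‖x‖ ≤ ‖T x‖ := by
  refine ⟨fun h => antilipschitzWith_iff_exists_mul_le_norm.1
    (antilipschitz_of_isEmbedding T (isHomeomorph_of_isUnit h).isEmbedding), ?_⟩
  rintro ⟨c, hc, hle⟩
  refine (isUnit_pow_iff two_ne_zero).1 (isUnit_of_forall_le_norm_inner_map (T ^ 2)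
    (c := .mk (c ^ 2) (by positivity)) (pow_pos hc 2) fun x => ?_)
  have hinner : ⟪(T ^ 2) x, x⟫_ℂ = ⟪T x, T x⟫_ℂ := by
    rw [pow_two]
    exact hT.isSymmetric (T x) x
  rw [hinner, inner_self_eq_norm_sq_to_K, norm_pow, RCLike.norm_ofReal, abs_norm, mul_comm,
    NNReal.coe_mk, ← mul_pow]
  exact pow_le_pow_left₀ (by positivity) (hle x) 2

theorem notMem_spectrum_iff_exists_mul_norm_le (hT : IsSelfAdjoint T) {μ : ℝ} :
    μ ∉ spectrum ℝ T ↔ ∃ c > 0, ∀ x, c * ‖x‖ ≤ ‖T x - (μ : ℂ) • x‖ := by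
  rw [spectrum.notMem_iff, ← IsUnit.neg_iff, neg_sub,
    isUnit_iff_exists_mul_norm_le_of_isSelfAdjoint (hT.sub (.algebraMap _ (.all μ)))]
  simp only [sub_algebraMap_real_apply]

theorem re_inner_apply_comm (hT : IsSelfAdjoint T) (x y : H) :
    RCLike.re ⟪T x, y⟫_ℂ = RCLike.re ⟪T y, x⟫_ℂ :=
  (congrArg RCLike.re (hT.isSymmetric x y)).trans (inner_re_symm _ _)

theorem re_inner_sub_smul_add_sub (hT : IsSelfAdjoint T) {y z : H} (hyz : ⟪y, z⟫_ℂ = 0) (μ : ℝ) :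
    RCLike.re ⟪T (y + z) - (μ : ℂ) • (y + z), z - y⟫_ℂ =
      (T.reApplyInnerSelf z - μ * ‖z‖ ^ 2) - (T.reApplyInnerSelf y - μ * ‖y‖ ^ 2) := by
  have hzy : ⟪z, y⟫_ℂ = 0 := inner_eq_zero_symm.1 hyz
  have hcomm := re_inner_apply_comm hT y z
  simp only [reApplyInnerSelf_apply, map_add, smul_add, inner_sub_left, inner_add_left,
    inner_sub_right, inner_smul_left, hyz, hzy, map_sub, hcomm, Complex.conj_ofReal,
    inner_self_eq_norm_sq_to_K, mul_zero, map_zero]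
  have hre : ∀ w : H, RCLike.re ((μ : ℂ) * (‖w‖ : ℂ) ^ 2) = μ * ‖w‖ ^ 2 := fun w => by
    norm_cast
  simp only [Complex.coe_algebraMap, hre]
  ring

theorem inner_apply_sub_apply_eq_zero (hP : IsStarProjection P) (x y : H) :
    ⟪P x, y - P y⟫_ℂ = 0 := by
  have hidem : P (P y) = P y := DFunLike.congr_fun hP.isIdempotentElem y
  exact (hP.isSelfAdjoint.isSymmetric x _).trans (by simp [hidem])

theorem disjoint_spectrum_Ioo (hT : IsSelfAdjoint T) (hP : IsStarProjection P) {α β : ℝ}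
    (hα : ∀ x, P x = x → T.reApplyInnerSelf x ≤ α * ‖x‖ ^ 2)
    (hβ : ∀ x, P x = 0 → β * ‖x‖ ^ 2 ≤ T.reApplyInnerSelf x) :
    Disjoint (spectrum ℝ T) (Set.Ioo α β) := by
  refine Set.disjoint_right.2 fun μ ⟨hαμ, hμβ⟩ => (notMem_spectrum_iff_exists_mul_norm_le hT).2
    ⟨min (μ - α) (β - μ), lt_min (sub_pos.2 hαμ) (sub_pos.2 hμβ), fun x => ?_⟩
  obtain ⟨y, z, rfl, hy, hz, hyz⟩ :
      ∃ y z, y + z = x ∧ P y = y ∧ P z = 0 ∧ ⟪y, z⟫_ℂ = 0 := by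
    have hidem : P (P x) = P x := DFunLike.congr_fun hP.isIdempotentElem x
    exact ⟨P x, x - P x, add_sub_cancel _ _, hidem, by rw [map_sub, hidem, sub_self],
      inner_apply_sub_apply_eq_zero hP x x⟩
  have hnorm := norm_add_sq_of_inner_eq_zero hyz
  have hnorm_sub : ‖z - y‖ = ‖y + z‖ := by
    rw [← sq_eq_sq₀ (norm_nonneg _) (norm_nonneg _), hnorm, norm_sub_rev, sub_eq_add_neg,
      norm_add_sq_of_inner_eq_zero (by rw [inner_neg_right, hyz, neg_zero]), norm_neg]
  rcases (norm_nonneg (y + z)).eq_or_lt with h0 | hpos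
  · rw [← h0, mul_zero]
    exact norm_nonneg _
  refine le_of_mul_le_mul_right ?_ hpos
  calc min (μ - α) (β - μ) * ‖y + z‖ * ‖y + z‖
      = min (μ - α) (β - μ) * ‖y‖ ^ 2 + min (μ - α) (β - μ) * ‖z‖ ^ 2 := by
        rw [mul_assoc, ← pow_two, hnorm, mul_add]
    _ ≤ (μ - α) * ‖y‖ ^ 2 + (β - μ) * ‖z‖ ^ 2 := by
        gcongr
        exacts [min_le_left _ _, min_le_right _ _]
    _ ≤ (T.reApplyInnerSelf z - μ * ‖z‖ ^ 2) - (T.reApplyInnerSelf y - μ * ‖y‖ ^ 2) := by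
        linarith [hα y hy, hβ z hz]
    _ ≤ ‖T (y + z) - (μ : ℂ) • (y + z)‖ * ‖z - y‖ :=
        re_inner_sub_smul_add_sub hT hyz μ ▸ re_inner_le_norm _ _
    _ = ‖T (y + z) - (μ : ℂ) • (y + z)‖ * ‖y + z‖ := by rw [hnorm_sub]

theorem min_mul_norm_le_norm_mul_apply_sub_smul (hP : IsStarProjection P) (hcomm : Commute T P)
    {c μ : ℝ} (hc : 0 ≤ c) (h : ∀ x, P x = x → c * ‖x‖ ≤ ‖T x - (μ : ℂ) • x‖) (x : H) :
    min c |μ| * ‖x‖ ≤ ‖(T * P) x - (μ : ℂ) • x‖ := by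
  have hidem : P (P x) = P x := DFunLike.congr_fun hP.isIdempotentElem x
  have hrange : T (P x) - (μ : ℂ) • P x = P (T x - (μ : ℂ) • x) := by
    rw [map_sub, map_smul, ← show T (P x) = P (T x) from DFunLike.congr_fun hcomm x]
  have horth : ⟪T (P x) - (μ : ℂ) • P x, -((μ : ℂ) • (x - P x))⟫_ℂ = 0 := by
    rw [hrange, inner_neg_right, inner_smul_right, inner_apply_sub_apply_eq_zero hP, mul_zero,
      neg_zero]
  have hsplit : (T * P) x - (μ : ℂ) • x =
      (T (P x) - (μ : ℂ) • P x) + -((μ : ℂ) • (x - P x)) := by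
    rw [mul_apply_eq_comp, smul_sub]
    abel
  have hP_le : min c |μ| * ‖P x‖ ≤ ‖T (P x) - (μ : ℂ) • P x‖ :=
    (mul_le_mul_of_nonneg_right (min_le_left _ _) (norm_nonneg _)).trans (h _ hidem)
  have hQ_le : min c |μ| * ‖x - P x‖ ≤ ‖-((μ : ℂ) • (x - P x))‖ := by
    rw [norm_neg, norm_smul, Complex.norm_real, Real.norm_eq_abs]
    exact mul_le_mul_of_nonneg_right (min_le_right _ _) (norm_nonneg _)
  refine (pow_le_pow_iff_left₀ (by positivity) (norm_nonneg _) two_ne_zero).1 ?_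
  calc (min c |μ| * ‖x‖) ^ 2 = (min c |μ| * ‖P x‖) ^ 2 + (min c |μ| * ‖x - P x‖) ^ 2 := by
        have := norm_add_sq_of_inner_eq_zero (inner_apply_sub_apply_eq_zero hP x x)
        rw [add_sub_cancel] at this
        rw [mul_pow, this, mul_add, mul_pow, mul_pow]
    _ ≤ ‖T (P x) - (μ : ℂ) • P x‖ ^ 2 + ‖-((μ : ℂ) • (x - P x))‖ ^ 2 := by gcongr
    _ = ‖(T * P) x - (μ : ℂ) • x‖ ^ 2 := by rw [hsplit, norm_add_sq_of_inner_eq_zero horth]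

theorem eq_zero_of_commute_of_forall_exists_mul_norm_le (hT : IsSelfAdjoint T)
    (hP : IsStarProjection P) (hcomm : Commute T P)
    (h : ∀ μ : ℝ, ∃ c > 0, ∀ x, P x = x → c * ‖x‖ ≤ ‖T x - (μ : ℂ) • x‖) : P = 0 := by
  have hS : IsSelfAdjoint (T * P) := (hT.commute_iff hP.isSelfAdjoint).1 hcomm
  have hspec : spectrum ℝ (T * P) ⊆ {0} := fun μ => by
    contrapose
    intro hμ
    obtain ⟨c, hc, hle⟩ := h μ
    exact (notMem_spectrum_iff_exists_mul_norm_le hS).2 ⟨min c |μ|, lt_min hc (abs_pos.2 hμ),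
        min_mul_norm_le_norm_mul_apply_sub_smul hP hcomm hc.le hle⟩
  have hzero : T * P = 0 := CFC.eq_zero_of_spectrum_subset_zero (R := ℝ) _ hspec hS
  obtain ⟨c, hc, hle⟩ := h 0
  ext x
  have hPx := hle (P x) (DFunLike.congr_fun hP.isIdempotentElem x)
  rw [show T (P x) = 0 from DFunLike.congr_fun hzero x, Complex.ofReal_zero, zero_smul, sub_zero,
    norm_zero] at hPx
  exact norm_le_zero_iff.1 (nonpos_of_mul_nonpos_right hPx hc)

theorem reApplyInnerSelf_apply_add (hT : IsSelfAdjoint T) (x y : H) :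
    T.reApplyInnerSelf (x + y) =
      T.reApplyInnerSelf x + T.reApplyInnerSelf y + 2 * RCLike.re ⟪T x, y⟫_ℂ := by
  simp only [reApplyInnerSelf_apply, map_add, inner_add_left, inner_add_right,
    re_inner_apply_comm hT y x]
  ring

theorem reApplyInnerSelf_apply_eq_zero {V : H →L[ℂ] H} (hP : IsSelfAdjoint P)
    (hV : P * V * P = 0) (x : H) : V.reApplyInnerSelf (P x) = 0 := by
  have hzero : P (V (P x)) = 0 := DFunLike.congr_fun hV x
  rw [reApplyInnerSelf_apply, ← show ⟪P (V (P x)), x⟫_ℂ = ⟪V (P x), P x⟫_ℂ from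
    hP.isSymmetric _ _, hzero, inner_zero_left, map_zero]

theorem reApplyInnerSelf_add_of_offDiagonal {V : H →L[ℂ] H} (hT : IsSelfAdjoint T)
    (hV : IsSelfAdjoint V) (hP : IsStarProjection P) (hcomm : Commute T P)
    (hoff : IsOffDiagonal P V) (x : H) :
    (T + V).reApplyInnerSelf x = T.reApplyInnerSelf (P x) +
      T.reApplyInnerSelf ((1 - P) x) + 2 * RCLike.re ⟪V (P x), (1 - P) x⟫_ℂ := by
  have hTPx : ⟪T (P x), (1 - P) x⟫_ℂ = 0 := by
    rw [show T (P x) = P (T x) from DFunLike.congr_fun hcomm x]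
    exact inner_apply_sub_apply_eq_zero hP (T x) x
  have hx : P x + (1 - P) x = x := add_sub_cancel _ _
  conv_lhs => rw [← hx]
  rw [reApplyInnerSelf_apply_add (hT.add hV), add_apply, inner_add_left, hTPx, zero_add]
  have hadd : ∀ y, (T + V).reApplyInnerSelf y = T.reApplyInnerSelf y + V.reApplyInnerSelf y :=
    fun y => by simp only [reApplyInnerSelf_apply, add_apply, inner_add_left, map_add]
  rw [hadd, hadd, reApplyInnerSelf_apply_eq_zero hP.isSelfAdjoint hoff.mul_mul_eq_zero,
    reApplyInnerSelf_apply_eq_zero hP.one_sub.isSelfAdjoint hoff.one_sub_mul_mul_eq_zero,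
    add_zero, add_zero]

end Hilbert

namespace IsSpectralMeasure

open ContinuousLinearMap MeasureTheory

open scoped InnerProductSpace Pointwise

variable {H : Type*} [NormedAddCommGroup H] [InnerProductSpace ℂ H] [CompleteSpace H]
  {T : H →L[ℂ] H} {E : Set ℝ → H →L[ℂ] H}

theorem isStarProjection (hE : IsSpectralMeasure T E) {Δ : Set ℝ} (hΔ : MeasurableSet Δ) :
    IsStarProjection (E Δ) where
  isIdempotentElem := (hE.map_inter Δ Δ hΔ hΔ).trans (by rw [Set.inter_self])
  isSelfAdjoint := hE.isSelfAdjoint Δ hΔ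

theorem map_empty (hE : IsSpectralMeasure T E) : E ∅ = 0 := by
  ext x
  exact (summable_const_iff _).1 (hE.countably_additive (fun _ => ∅) (fun _ => .empty)
    (fun _ _ _ => disjoint_bot_left) x).summable

open scoped Classical in
/-- The `H`-valued vector measure `Δ ↦ E Δ x`, set to `0` on nonmeasurable sets as
`MeasureTheory.VectorMeasure` requires. It gives access to the additivity lemmas for vector
measures. -/
noncomputable def vectorMeasure (hE : IsSpectralMeasure T E) (x : H) : VectorMeasure ℝ H where
  measureOf' Δ := if MeasurableSet Δ then E Δ x else 0
  empty' := by rw [if_pos .empty, hE.map_empty, zero_apply]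
  not_measurable' _ hΔ := if_neg hΔ
  m_iUnion' Δ hΔ hdisj := by
    simpa only [hΔ, MeasurableSet.iUnion hΔ, if_true] using hE.countably_additive Δ hΔ hdisj x

theorem vectorMeasure_apply (hE : IsSpectralMeasure T E) (x : H) {Δ : Set ℝ}
    (hΔ : MeasurableSet Δ) : hE.vectorMeasure x Δ = E Δ x :=
  if_pos hΔ

theorem map_union (hE : IsSpectralMeasure T E) {Δ₁ Δ₂ : Set ℝ} (h₁ : MeasurableSet Δ₁)
    (h₂ : MeasurableSet Δ₂) (hdisj : Disjoint Δ₁ Δ₂) : E (Δ₁ ∪ Δ₂) = E Δ₁ + E Δ₂ := by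
  ext x
  rw [add_apply, ← hE.vectorMeasure_apply x (h₁.union h₂), VectorMeasure.of_union hdisj h₁ h₂,
    hE.vectorMeasure_apply x h₁, hE.vectorMeasure_apply x h₂]

theorem map_compl (hE : IsSpectralMeasure T E) {Δ : Set ℝ} (hΔ : MeasurableSet Δ) :
    E Δᶜ = 1 - E Δ := by
  rw [eq_sub_iff_add_eq', ← hE.map_union hΔ hΔ.compl disjoint_compl_right, Set.union_compl_self,
    hE.map_univ]

theorem apply_of_subset (hE : IsSpectralMeasure T E) {Δ₁ Δ₂ : Set ℝ} (h₁ : MeasurableSet Δ₁)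
    (h₂ : MeasurableSet Δ₂) (hsub : Δ₁ ⊆ Δ₂) {x : H} (hx : E Δ₁ x = x) : E Δ₂ x = x := by
  rw [← hx, ← mul_apply_eq_comp, hE.map_inter _ _ h₂ h₁, Set.inter_eq_right.2 hsub]

theorem apply_inter_apply (hE : IsSpectralMeasure T E) {Δ₁ Δ₂ : Set ℝ} (h₁ : MeasurableSet Δ₁)
    (h₂ : MeasurableSet Δ₂) {x : H} (hx : E Δ₂ x = x) : E (Δ₁ ∩ Δ₂) (E Δ₁ x) = E Δ₁ x := by
  have hinter : E Δ₁ x = E (Δ₁ ∩ Δ₂) x := by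
    rw [← hE.map_inter _ _ h₁ h₂, mul_apply_eq_comp, hx]
  rw [hinter]
  exact DFunLike.congr_fun (hE.isStarProjection (h₁.inter h₂)).isIdempotentElem x

theorem map_iUnion_eq_zero (hE : IsSpectralMeasure T E) {Δ : ℕ → Set ℝ}
    (hΔ : ∀ n, MeasurableSet (Δ n)) (hzero : ∀ n, E (Δ n) = 0) : E (⋃ n, Δ n) = 0 := by
  ext x
  have hmeas : ∀ n, MeasurableSet (disjointed Δ n) := .disjointed hΔ
  have hnull : ∀ n, E (disjointed Δ n) x = 0 := fun n => by
    rw [← Set.inter_eq_left.2 (disjointed_subset Δ n), ← hE.map_inter _ _ (hmeas n) (hΔ n),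
      hzero, mul_zero, zero_apply]
  have hsum := hE.countably_additive _ hmeas (disjoint_disjointed Δ) x
  rw [iUnion_disjointed] at hsum
  simp only [hnull] at hsum
  exact hsum.unique hasSum_zero

theorem mul_norm_le (hE : IsSpectralMeasure T E) {Δ : Set ℝ} (hΔ : MeasurableSet Δ) {μ c : ℝ}
    (hc : ∀ t ∈ Δ, c ≤ dist μ t) {x : H} (hx : E Δ x = x) :
    c * ‖x‖ ≤ ‖T x - (μ : ℂ) • x‖ := by
  rcases Δ.eq_empty_or_nonempty with rfl | hne
  · rw [← hx, hE.map_empty]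
    simp
  · exact (mul_le_mul_of_nonneg_right ((Metric.le_infDist hne).2 fun t ht => hc t ht)
      (norm_nonneg x)).trans (hE.spectrum_loc Δ hΔ x hx μ)

theorem mul_sq_le_reApplyInnerSelf (hE : IsSpectralMeasure T E) {Δ : Set ℝ}
    (hΔ : MeasurableSet Δ) {α : ℝ} (hα : ∀ t ∈ Δ, α ≤ t) {x : H} (hx : E Δ x = x) :
    α * ‖x‖ ^ 2 ≤ T.reApplyInnerSelf x := by
  have hform : T.reApplyInnerSelf x - α * ‖x‖ ^ 2 =
      RCLike.re ⟪T x - (α : ℂ) • x, x⟫_ℂ := by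
    simp [reApplyInnerSelf_apply, ← Complex.ofReal_pow]
  refine sub_nonneg.1 (hform ▸ nonneg_of_forall_nonneg_add_mul
    (k := ‖T x - (α : ℂ) • x‖ ^ 2 / 2) fun r hr => ?_)
  have hle : r * ‖x‖ ≤ ‖T x - (α : ℂ) • x + (r : ℂ) • x‖ := by
    convert hE.mul_norm_le (μ := α - r) hΔ (fun t ht => ?_) hx using 2
    · push_cast
      rw [sub_smul]
      abel
    · rw [dist_comm, Real.dist_eq]
      exact le_abs.2 (.inl (by linarith [hα t ht]))
  have hsq := pow_le_pow_left₀ (by positivity) hle 2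
  rw [norm_add_sq (𝕜 := ℂ), inner_smul_right, norm_smul, Complex.norm_real, Real.norm_eq_abs,
    abs_of_pos hr, mul_pow, show ∀ z : ℂ, RCLike.re (r * z) = r * RCLike.re z from
      Complex.re_ofReal_mul r] at hsq
  linarith

theorem map_eq_zero_of_isClosed (hE : IsSpectralMeasure T E) (hT : IsSelfAdjoint T) {K : Set ℝ}
    (hK : IsClosed K) (hdisj : Disjoint K (spectrum ℝ T)) : E K = 0 := by
  refine eq_zero_of_commute_of_forall_exists_mul_norm_le hT (hE.isStarProjection hK.measurableSet)
    (hE.commutes K hK.measurableSet) fun μ => ?_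
  by_cases hμ : μ ∈ K
  · obtain ⟨c, hc, hle⟩ := (notMem_spectrum_iff_exists_mul_norm_le hT).1
      (Set.disjoint_left.1 hdisj hμ)
    exact ⟨c, hc, fun x _ => hle x⟩
  · obtain ⟨r, hr, hball⟩ := Metric.isOpen_iff.1 hK.isOpen_compl μ hμ
    refine ⟨r, hr, fun x => hE.mul_norm_le hK.measurableSet fun t ht => ?_⟩
    rw [dist_comm]
    exact not_lt.1 fun hlt => hball hlt ht

theorem map_spectrum (hE : IsSpectralMeasure T E) (hT : IsSelfAdjoint T) :
    E (spectrum ℝ T) = 1 := by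
  have hclosed : IsClosed (spectrum ℝ T) := spectrum.isClosed T
  obtain ⟨F, hF, hFsub, hFU, -⟩ := hclosed.isOpen_compl.exists_iUnion_isClosed
  have hcompl : E (spectrum ℝ T)ᶜ = 0 := by
    rw [← hFU]
    exact hE.map_iUnion_eq_zero (fun n => (hF n).measurableSet) fun n =>
      hE.map_eq_zero_of_isClosed hT (hF n) (Set.disjoint_left.2 fun t ht => hFsub n ht)
  exact (sub_eq_zero.1 ((hE.map_compl hclosed.measurableSet).symm.trans hcompl)).symm

theorem neg (hE : IsSpectralMeasure T E) : IsSpectralMeasure (-T) fun Δ => E (-Δ) where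
  isSelfAdjoint Δ hΔ := hE.isSelfAdjoint _ hΔ.neg
  map_inter Δ₁ Δ₂ h₁ h₂ := by rw [hE.map_inter _ _ h₁.neg h₂.neg, Set.inter_neg]
  map_univ := by rw [Set.neg_univ, hE.map_univ]
  countably_additive Δ hΔ hdisj x := by
    rw [Set.iUnion_neg]
    exact hE.countably_additive _ (fun n => (hΔ n).neg)
      (fun m n hmn => (hdisj hmn).preimage _) x
  commutes Δ hΔ := (hE.commutes _ hΔ.neg).neg_left
  spectrum_loc Δ hΔ x hx μ := by
    have hloc := hE.spectrum_loc _ hΔ.neg x hx (-μ)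
    rw [infDist_neg_neg] at hloc
    convert hloc using 1
    rw [neg_apply, ← norm_neg]
    push_cast
    rw [neg_smul]
    congr 1
    abel

variable {V : H →L[ℂ] H} {σ τ : Set ℝ}

theorem exists_lt_mul_sq_le_reApplyInnerSelf_add (hE : IsSpectralMeasure T E)
    (hT : IsSelfAdjoint T) (hV : IsSelfAdjoint V) (hσ : MeasurableSet σ) (hτ : MeasurableSet τ)
    (hEτ : E τ = 1 - E σ) (hoff : IsOffDiagonal (E σ) V) {μ : ℝ}
    (hgap : HasGapAbove σ τ ‖V‖ μ) :
    ∃ β > μ, ∀ x, E (Set.Ici μ) x = x → β * ‖x‖ ^ 2 ≤ (T + V).reApplyInnerSelf x := by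
  obtain ⟨p, hp, q, hq, hpq, hσp, hτq⟩ := hgap
  obtain ⟨c, hc, hle⟩ := exists_pos_mul_sq_add_sq_le hp hq hpq
  refine ⟨μ + c, lt_add_of_pos_right μ hc, fun x hx => ?_⟩
  have hσx : (μ + p) * ‖E σ x‖ ^ 2 ≤ T.reApplyInnerSelf (E σ x) :=
    hE.mul_sq_le_reApplyInnerSelf (hσ.inter measurableSet_Ici) (fun s hs => hσp s hs.1 hs.2)
      (hE.apply_inter_apply hσ measurableSet_Ici hx)
  have hτx : (μ + q) * ‖E τ x‖ ^ 2 ≤ T.reApplyInnerSelf (E τ x) :=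
    hE.mul_sq_le_reApplyInnerSelf (hτ.inter measurableSet_Ici) (fun t ht => hτq t ht.1 ht.2)
      (hE.apply_inter_apply hτ measurableSet_Ici hx)
  have hcross : -(‖V‖ * ‖E σ x‖ * ‖E τ x‖) ≤ RCLike.re ⟪V (E σ x), E τ x⟫_ℂ := by
    refine neg_le_of_abs_le ((RCLike.abs_re_le_norm _).trans ((norm_inner_le_norm _ _).trans ?_))
    exact mul_le_mul_of_nonneg_right (V.le_opNorm _) (norm_nonneg _)
  have hnorm : ‖x‖ ^ 2 = ‖E σ x‖ ^ 2 + ‖E τ x‖ ^ 2 := by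
    rw [hEτ, sub_apply, one_apply_eq_self,
      ← norm_add_sq_of_inner_eq_zero (inner_apply_sub_apply_eq_zero (hE.isStarProjection hσ) x x),
      add_sub_cancel]
  have hform := reApplyInnerSelf_add_of_offDiagonal hT hV (hE.isStarProjection hσ)
    (hE.commutes σ hσ) hoff x
  rw [← hEτ] at hform
  rw [hform, hnorm]
  linarith [hle ‖E σ x‖ ‖E τ x‖]

theorem notMem_spectrum_add (hE : IsSpectralMeasure T E) (hT : IsSelfAdjoint T)
    (hV : IsSelfAdjoint V) (hσ : MeasurableSet σ) (hτ : MeasurableSet τ)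
    (hEτ : E τ = 1 - E σ) (hoff : IsOffDiagonal (E σ) V) {μ : ℝ}
    (habove : HasGapAbove σ τ ‖V‖ μ) (hbelow : HasGapAbove (-σ) (-τ) ‖V‖ (-μ)) :
    μ ∉ spectrum ℝ (T + V) := by
  obtain ⟨β, hβ, hβle⟩ := hE.exists_lt_mul_sq_le_reApplyInnerSelf_add hT hV hσ hτ hEτ hoff
    habove
  obtain ⟨α, hα, hαle⟩ := hE.neg.exists_lt_mul_sq_le_reApplyInnerSelf_add (V := -V) hT.neg hV.neg
    hσ.neg hτ.neg (by simpa using hEτ) (by simpa using hoff.neg) (by simpa using hbelow)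
  refine Set.disjoint_right.1 (disjoint_spectrum_Ioo (hT.add hV)
    (hE.isStarProjection measurableSet_Iio) (P := E (Set.Iio μ)) (α := -α) (β := β)
    (fun x hx => ?_) fun x hx => hβle x ?_) ⟨neg_lt.1 hα, hβ⟩
  · have hneg : (-T + -V).reApplyInnerSelf x = -(T + V).reApplyInnerSelf x := by
      simp only [reApplyInnerSelf_apply, ← neg_add, neg_apply, inner_neg_left, map_neg]
    have := hαle x (by
      rw [Set.neg_Ici, neg_neg]
      exact hE.apply_of_subset measurableSet_Iio measurableSet_Iic Set.Iio_subset_Iic_self hx)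
    linarith
  · rw [← Set.compl_Iio, hE.map_compl measurableSet_Iio, sub_apply, hx, sub_zero,
      one_apply_eq_self]

end IsSpectralMeasure

section Continuity

theorem one_le_norm_of_isIdempotentElem {R : Type*} [NormedRing R] {p : R}
    (hp : IsIdempotentElem p) (h : p ≠ 0) : 1 ≤ ‖p‖ := by
  have hle := norm_mul_le p p
  rw [hp.eq] at hle
  exact (le_mul_iff_one_le_right (norm_pos_iff.2 h)).1 hle

variable {X : Type*} [TopologicalSpace X] [PreconnectedSpace X]

theorem eq_zero_of_continuous_of_isIdempotentElem {R : Type*} [NormedRing R] {p : X → R}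
    (hp : Continuous p) (hidem : ∀ x, IsIdempotentElem (p x)) {x₀ : X} (hx₀ : p x₀ = 0) (x : X) :
    p x = 0 := by
  have hball : p ⁻¹' {0} = p ⁻¹' Metric.ball 0 1 := by
    refine (Set.preimage_mono (by simp)).antisymm fun y hy => ?_
    by_contra hne
    exact (one_le_norm_of_isIdempotentElem (hidem y) hne).not_gt (mem_ball_zero_iff.1 hy)
  have hclopen : IsClopen (p ⁻¹' {0}) :=
    ⟨isClosed_singleton.preimage hp, hball ▸ Metric.isOpen_ball.preimage hp⟩
  exact Set.eq_univ_iff_forall.1 (hclopen.eq_univ ⟨x₀, hx₀⟩) x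

theorem spectrum_inter_nonempty_of_continuous {𝒜 : Type*} [CStarAlgebra 𝒜] {a : X → 𝒜}
    (ha : Continuous a) (hsa : ∀ x, IsSelfAdjoint (a x)) {K U : Set ℝ}
    (hK : IsClosed K) (hU : IsOpen U) (hKU : K ⊆ U) (hspec : ∀ x, spectrum ℝ (a x) ∩ U ⊆ K)
    {x₀ : X} (hx₀ : (spectrum ℝ (a x₀) ∩ U).Nonempty) (x : X) :
    (spectrum ℝ (a x) ∩ U).Nonempty := by
  obtain ⟨f, hf_zero, hf_one, -⟩ := exists_continuous_zero_one_of_isClosed hU.isClosed_compl hK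
    (Set.disjoint_compl_left_iff_subset.2 hKU)
  have hf_idem : ∀ y, Set.EqOn (fun t => f t * f t) f (spectrum ℝ (a y)) := fun y t ht => by
    by_cases htU : t ∈ U
    · simp [hf_one (hspec y ⟨ht, htU⟩)]
    · simp [hf_zero htU]
  have hidem : ∀ y, IsIdempotentElem (cfc f (a y)) := fun y =>
    (cfc_mul f f (a y)).symm.trans (cfc_congr (hf_idem y))
  have hcont : Continuous fun y => cfc f (a y) :=
    ha.cfc_of_mem_nhdsSet f Filter.univ_mem hsa f.continuous.continuousOn
  have hcfc : ∀ y, cfc f (a y) = 0 ↔ ¬ (spectrum ℝ (a y) ∩ U).Nonempty := fun y => by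
    rw [← cfc_const_zero ℝ (a y), cfc_eq_cfc_iff_eqOn]
    refine ⟨fun hzero ⟨t, ht, htU⟩ => ?_,
      fun hempty t ht => hf_zero fun htU => hempty ⟨t, ht, htU⟩⟩
    have h1 : f t = 1 := hf_one (hspec y ⟨ht, htU⟩)
    exact one_ne_zero (h1.symm.trans (hzero ht))
  by_contra hempty
  have hzero := eq_zero_of_continuous_of_isIdempotentElem hcont hidem ((hcfc x).2 hempty) x₀
  exact (hcfc x₀).1 hzero hx₀

end Continuity

namespace IsSpectralMeasure

open scoped Pointwise

variable {H : Type*} [NormedAddCommGroup H] [InnerProductSpace ℂ H] [CompleteSpace H]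
  {A V : H →L[ℂ] H} {E : Set ℝ → H →L[ℂ] H} {σ τ : Set ℝ} {d δ : ℝ}

theorem spectrum_add_inter_thickening_subset (hE : IsSpectralMeasure A E) (hA : IsSelfAdjoint A)
    (hV : IsSelfAdjoint V) (hσ : MeasurableSet σ) (hτ : MeasurableSet τ)
    (hEτ : E τ = 1 - E σ) (hoff : IsOffDiagonal (E σ) V)
    (hd : 0 < d) (hsep : ∀ t ∈ τ, (∀ s ∈ σ, s + d ≤ t) ∨ ∀ s ∈ σ, t + d ≤ s)
    (hδ : 0 ≤ δ) (hδV : ‖V‖ ^ 2 ≤ δ * (δ + d)) :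
    spectrum ℝ (A + V) ∩ Metric.thickening d σ ⊆ Metric.cthickening δ σ := by
  rintro μ ⟨hμ, hμd⟩
  obtain ⟨s, hs, hsμ⟩ := Metric.mem_thickening_iff.1 hμd
  rw [dist_comm] at hsμ
  by_contra hfar
  have hinf : δ < Metric.infDist μ σ := not_le.1 fun hle =>
    hfar ((ENNReal.le_ofReal_iff_toReal_le (Metric.infEDist_ne_top ⟨s, hs⟩) hδ).2 hle)
  set r := Metric.infDist μ σ
  have hr : 0 < r := hδ.trans_lt hinf
  have hVr : ‖V‖ ^ 2 < r * (r + d) := hδV.trans_lt (by gcongr)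
  have hle : ∀ s ∈ σ, r ≤ dist s μ := fun s hs =>
    dist_comm s μ ▸ Metric.infDist_le_dist_of_mem hs
  refine hE.notMem_spectrum_add hA hV hσ hτ hEτ hoff
    (hasGapAbove_of_forall_add_le_or hr hd hVr hsep hle ⟨s, hs, hsμ⟩)
    (hasGapAbove_of_forall_add_le_or hr hd hVr (fun t ht => ?_) (fun s hs => ?_)
      ⟨-s, by simpa using hs, by rwa [dist_neg_neg]⟩) hμ
  · refine (hsep (-t) ht).symm.imp (fun h s hs => ?_) fun h s hs => ?_
    all_goals linarith [h (-s) hs]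
  · rw [← dist_neg_neg, neg_neg]
    exact hle _ hs

theorem spectrum_add_inter_thickening_nonempty (hE : IsSpectralMeasure A E)
    (hA : IsSelfAdjoint A) (hV : IsSelfAdjoint V) (hσ : MeasurableSet σ) (hτ : MeasurableSet τ)
    (hEτ : E τ = 1 - E σ) (hoff : IsOffDiagonal (E σ) V)
    (hσA : (spectrum ℝ A ∩ σ).Nonempty) (hd : 0 < d)
    (hsep : ∀ t ∈ τ, (∀ s ∈ σ, s + d ≤ t) ∨ ∀ s ∈ σ, t + d ≤ s)
    (hδ : 0 ≤ δ) (hδd : δ < d) (hδV : ‖V‖ ^ 2 ≤ δ * (δ + d)) :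
    (spectrum ℝ (A + V) ∩ Metric.thickening d σ).Nonempty := by
  have hsa : ∀ t : ℝ, IsSelfAdjoint (t • V) := fun t => (IsSelfAdjoint.all t).smul hV
  have hspec : ∀ t : unitInterval, spectrum ℝ (A + (t : ℝ) • V) ∩ Metric.thickening d σ ⊆
      Metric.cthickening δ σ := fun t => by
    refine hE.spectrum_add_inter_thickening_subset hA (hsa t) hσ hτ hEτ (hoff.smul _) hd hsep hδ
      ((pow_le_pow_left₀ (norm_nonneg _) ?_ 2).trans hδV)
    rw [norm_smul, Real.norm_of_nonneg t.2.1]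
    exact mul_le_of_le_one_left (norm_nonneg V) t.2.2
  have hzero : (spectrum ℝ (A + ((0 : unitInterval) : ℝ) • V) ∩
      Metric.thickening d σ).Nonempty := by
    rw [Set.Icc.coe_zero, zero_smul, add_zero]
    exact hσA.mono (Set.inter_subset_inter_right _ (Metric.self_subset_thickening hd σ))
  have hone := spectrum_inter_nonempty_of_continuous (a := fun t : unitInterval => A + (t : ℝ) • V)
    (by fun_prop) (fun t => hA.add (hsa t))
    Metric.isClosed_cthickening Metric.isOpen_thickening
    (Metric.cthickening_subset_thickening' hd hδd σ) hspec hzero 1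
  rwa [Set.Icc.coe_one, one_smul] at hone

end IsSpectralMeasure

theorem spectrum_separated_d_neighborhood_general
    {H : Type*} [NormedAddCommGroup H] [InnerProductSpace ℂ H] [CompleteSpace H]
    {A V : H →L[ℂ] H} (hA : IsSelfAdjoint A) (hV : IsSelfAdjoint V) {σ τ : Set ℝ}
    (hσ : MeasurableSet σ) (hτ : MeasurableSet τ) (hne : σ.Nonempty)
    (hspec : spectrum ℝ A = σ ∪ τ) {d : ℝ} (hd : 0 < d) (hdist : ∀ s ∈ σ, ∀ t ∈ τ, d ≤ dist s t)
    {E : Set ℝ → H →L[ℂ] H} (hE : IsSpectralMeasure A E)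
    (hVσ : E σ * V * E σ = 0) (hVτ : E τ * V * E τ = 0)
    (hconv : Disjoint (convexHull ℝ σ) τ) (hnorm : ‖V‖ < Real.sqrt 2 * d) :
    spectrum ℝ (A + V) ∩ Metric.thickening d σ =
        spectrum ℝ (A + V) ∩ Metric.cthickening (offDiagonalShift ‖V‖ d) σ ∧
      (spectrum ℝ (A + V) ∩ Metric.thickening d σ).Nonempty ∧
      IsClosed (spectrum ℝ (A + V) ∩ Metric.thickening d σ) := by
  have hδ := offDiagonalShift_nonneg (norm_nonneg V) hd.le
  have hδd := offDiagonalShift_lt (norm_nonneg V) hd hnorm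
  have hδV := (offDiagonalShift_mul_add (v := ‖V‖) hd.ne').ge
  have hEτ : E τ = 1 - E σ := by
    rw [eq_sub_iff_add_eq', ← hE.map_union hσ hτ (hconv.mono_left (subset_convexHull ℝ σ)),
      ← hspec, hE.map_spectrum hA]
  have hoff : IsOffDiagonal (E σ) V := ⟨hVσ, hEτ ▸ hVτ⟩
  have hsep := fun t ht =>
    forall_add_le_or_forall_add_le_of_disjoint_convexHull hconv hdist (t := t) ht
  have hσA : (spectrum ℝ A ∩ σ).Nonempty := by
    rwa [hspec, Set.union_inter_cancel_left]
  have hsubset := hE.spectrum_add_inter_thickening_subset hA hV hσ hτ hEτ hoff hd hsep hδ hδV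
  have heq := (Set.subset_inter Set.inter_subset_left hsubset).antisymm
    (Set.inter_subset_inter_right _ (Metric.cthickening_subset_thickening' hd hδd σ))
  exact ⟨heq, hE.spectrum_add_inter_thickening_nonempty hA hV hσ hτ hEτ hoff hσA hd hsep hδ hδd
    hδV, heq ▸ (spectrum.isClosed _).inter Metric.isClosed_cthickening⟩

/-- **Theorem (Theorem 2.1 (iii)).** If the convex hull of `σ` does not intersect `Σ` and
`‖V‖ < √2 d` (equivalently `δ_V < d`), then the spectrum of `B = A + V` in the open
`d`-neighborhood of `σ` is separated from the remainder of the spectrum of `B`: it coincides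
with the part of `spec B` in the closed `δ_V`-neighborhood of `σ`, and it is a nonempty
closed set. -/
theorem spectrum_separated_d_neighborhood
    {H : Type*} [NormedAddCommGroup H] [InnerProductSpace ℂ H] [CompleteSpace H]
    [TopologicalSpace.SeparableSpace H]
    (A V B : H →L[ℂ] H) (hA : IsSelfAdjoint A) (hV : IsSelfAdjoint V) (hB : B = A + V)
    (σ Sig : Set ℝ) (hσc : IsClosed σ) (hSigc : IsClosed Sig) (hdisj : Disjoint σ Sig)
    (hspec : spectrum ℝ A = σ ∪ Sig)
    (d : ℝ) (hd : d = sInf (Set.image2 dist σ Sig)) (hd0 : 0 < d)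
    (EA : Set ℝ → H →L[ℂ] H) (hEA : IsSpectralMeasure A EA)
    (hoff₁ : EA σ * V * EA σ = 0) (hoff₂ : EA Sig * V * EA Sig = 0)
    (δ : ℝ) (hδ : δ = ‖V‖ * Real.tan (Real.arctan (2 * ‖V‖ / d) / 2))
    (hconv : Disjoint (convexHull ℝ σ) Sig)
    (hnorm : ‖V‖ < Real.sqrt 2 * d) :
    spectrum ℝ B ∩ Metric.thickening d σ = spectrum ℝ B ∩ Metric.cthickening δ σ ∧
    (spectrum ℝ B ∩ Metric.thickening d σ).Nonempty ∧
    IsClosed (spectrum ℝ B ∩ Metric.thickening d σ) := by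
  subst hB hδ
  have hdist : ∀ s ∈ σ, ∀ t ∈ Sig, d ≤ dist s t := fun s hs t ht =>
    hd.trans_le (sInf_image2_dist_le hs ht)
  have hne : σ.Nonempty := (Set.image2_nonempty_iff.1 (nonempty_of_sInf_pos (hd ▸ hd0))).1
  exact spectrum_separated_d_neighborhood_general hA hV hσc.measurableSet hSigc.measurableSet hne
    hspec hd0 hdist hEA hoff₁ hoff₂ hconv hnorm
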